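/- Let n ≥ 1 and let S be an invertible n×n real matrix. Define φ on vectors v ∈ ℝⁿ with strictly positive entries by φ(v) = the vector of diagonal entries of the positive-semidefinite square root of diag(v)^{1/2}(SᵀS)diag(v)^{1/2}. Then φ has exactly one fixed point among vectors in ℝⁿ with all entries strictly positive: there exists a unique λ ∈ ℝⁿ with λᵢ > 0 for all i and φ(λ) = λ. -/

import Mathlib

open Matrix

/-!
Put `A = SᵀS` and `T = diag(v)^{1/2}`. A positive semidefinite `R` with `R² = TAT` and diagonal `v`
is the same thing as `R = TPT` with `P` positive definite, of unit diagonal, and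
`P diag(v) P = A`. So it suffices to show that `A` has exactly one such factorization.

For every `W` and every invertible `Q`,
`tr (PWP Q⁻¹) = tr (W (2P - Q)) + tr (W (P - Q) Q⁻¹ (P - Q))`.
The last term is of second order in `P - Q`, so a minimizer `P` of `Q ↦ tr (A Q⁻¹)` among the
positive definite matrices of unit diagonal makes `W = P⁻¹AP⁻¹` orthogonal to every Hermitian
matrix with zero diagonal, that is, diagonal. Conversely, when `W` is diagonal and positive, the
first term is the constant `tr W` and the last one is positive unless `Q = P`, so that `P` is the
only minimizer.
-/

section

open Filter RCLike Topology

open scoped ComplexOrder MatrixOrder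

variable {𝕜 ι : Type*} [RCLike 𝕜]

lemma eq_zero_of_nonneg_of_re_nonpos {z : 𝕜} (hz : 0 ≤ z) (hre : re z ≤ 0) : z = 0 :=
  le_antisymm (le_iff_re_im.mpr ⟨by simpa using hre, (le_iff_re_im.mp hz).2.symm⟩) hz

lemma exists_smul_one_le [Finite ι] [DecidableEq ι] {H : Matrix ι ι 𝕜} (hH : H.IsHermitian) :
    ∃ c : ℝ, c • (1 : Matrix ι ι 𝕜) ≤ H := by
  have := Fintype.ofFinite ι
  obtain ⟨c, hc⟩ := H.finite_real_spectrum.bddBelow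
  refine ⟨c, ?_⟩
  rw [← Algebra.algebraMap_eq_smul_one]
  exact (algebraMap_le_iff_le_spectrum hH).mpr fun _ hx => hc hx

lemma exists_pos_smul_one_le [Finite ι] [DecidableEq ι] {A : Matrix ι ι 𝕜} (hA : A.PosDef) :
    ∃ ε : ℝ, 0 < ε ∧ ε • (1 : Matrix ι ι 𝕜) ≤ A := by
  have := Fintype.ofFinite ι
  cases isEmpty_or_nonempty ι
  · exact ⟨1, one_pos, (Subsingleton.elim _ _).le⟩
  simp only [← Algebra.algebraMap_eq_smul_one]
  exact (CFC.exists_pos_algebraMap_le_iff hA.isHermitian).mpr fun _ hx =>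
    hA.isStrictlyPositive.spectrum_pos hx

lemma eventually_posDef_add_smul [Finite ι] {P H : Matrix ι ι 𝕜} (hP : P.PosDef)
    (hH : H.IsHermitian) :
    ∀ᶠ t : ℝ in 𝓝[>] 0, (P + t • H).PosDef := by
  classical
  have := Fintype.ofFinite ι
  obtain ⟨ε, hε, hεP⟩ := exists_pos_smul_one_le hP
  obtain ⟨c, hcH⟩ := exists_smul_one_le hH
  have hlim : Tendsto (fun t : ℝ => ε + t * c) (𝓝[>] 0) (𝓝 ε) := by
    have hcont : Continuous fun t : ℝ => ε + t * c := by fun_prop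
    simpa using (hcont.tendsto 0).mono_left nhdsWithin_le_nhds
  filter_upwards [hlim.eventually_const_lt hε, self_mem_nhdsWithin] with t hpos ht
  have hle : (ε + t * c) • (1 : Matrix ι ι 𝕜) ≤ P + t • H := by
    rw [add_smul, mul_smul]
    exact add_le_add hεP (smul_le_smul_of_nonneg_left hcH (Set.mem_Ioi.mp ht).le)
  simpa using (PosDef.one.smul hpos).add_posSemidef (le_iff.mp hle)

variable [Fintype ι]

lemma trace_mul_mul_mul_inv {R : Type*} [CommRing R] [DecidableEq ι] (P W : Matrix ι ι R)
    {Q : Matrix ι ι R} (hQ : IsUnit Q.det) :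
    (P * W * P * Q⁻¹).trace =
      (W * (2 • P - Q)).trace + (W * ((P - Q) * Q⁻¹ * (P - Q))).trace := by
  have hexpand : (P - Q) * Q⁻¹ * (P - Q) = P * Q⁻¹ * P - (2 • P - Q) := by
    simp only [Matrix.sub_mul, Matrix.mul_sub, mul_nonsing_inv _ hQ, Matrix.one_mul,
      nonsing_inv_mul_cancel_right _ _ hQ]
    abel
  calc (P * W * P * Q⁻¹).trace = (W * (P * Q⁻¹ * P)).trace := by
        rw [Matrix.mul_assoc, Matrix.mul_assoc, trace_mul_comm, Matrix.mul_assoc]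
    _ = (W * (2 • P - Q)).trace + (W * ((P - Q) * Q⁻¹ * (P - Q))).trace := by
        rw [hexpand, ← trace_add, ← Matrix.mul_add, add_sub_cancel]

lemma trace_mul_nonneg {A B : Matrix ι ι 𝕜} (hA : A.PosSemidef) (hB : B.PosSemidef) :
    0 ≤ (A * B).trace := by
  classical
  obtain ⟨C, rfl⟩ := CStarAlgebra.nonneg_iff_eq_star_mul_self.mp hA.nonneg
  rw [star_eq_conjTranspose, Matrix.mul_assoc, trace_mul_comm]
  exact (hB.mul_mul_conjTranspose_same C).trace_nonneg

lemma posSemidef_mul_mul_same {B Δ : Matrix ι ι 𝕜} (hB : B.PosSemidef) (hΔ : Δ.IsHermitian) :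
    (Δ * B * Δ).PosSemidef := by
  simpa only [hΔ.eq] using hB.mul_mul_conjTranspose_same Δ

lemma re_trace_conjTranspose_mul_self {κ : Type*} [Fintype κ] (B : Matrix κ ι 𝕜) :
    re (Bᴴ * B).trace = ∑ j, ∑ i, ‖B i j‖ ^ 2 := by
  simp only [trace, diag_apply, mul_apply, conjTranspose_apply, star_def, RCLike.conj_mul, map_sum]
  norm_cast

lemma isCompact_setOf_re_trace_conjTranspose_mul_self_le {κ : Type*} [Fintype κ] (c : ℝ) :
    IsCompact {B : Matrix κ ι 𝕜 | re (Bᴴ * B).trace ≤ c} := by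
  refine IsCompact.of_isClosed_subset (X := Matrix κ ι 𝕜)
    (isCompact_univ_pi fun _ : κ => isCompact_univ_pi fun _ : ι =>
      isCompact_closedBall (0 : 𝕜) √c)
    (isClosed_le (continuous_re.comp (by fun_prop)) continuous_const) fun B hB i _ j _ => ?_
  rw [mem_closedBall_zero_iff]
  refine Real.le_sqrt_of_sq_le (le_trans ?_ hB)
  rw [re_trace_conjTranspose_mul_self]
  calc ‖B i j‖ ^ 2 ≤ ∑ i, ‖B i j‖ ^ 2 :=
        Finset.single_le_sum (f := fun i => ‖B i j‖ ^ 2) (fun _ _ => by positivity)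
          (Finset.mem_univ i)
    _ ≤ ∑ j, ∑ i, ‖B i j‖ ^ 2 :=
        Finset.single_le_sum (f := fun j => ∑ i, ‖B i j‖ ^ 2) (fun _ _ => by positivity)
          (Finset.mem_univ j)

lemma continuousAt_inv_of_isUnit_det [DecidableEq ι] {A : Matrix ι ι 𝕜} (hA : IsUnit A.det) :
    ContinuousAt (fun B : Matrix ι ι 𝕜 => B⁻¹) A := by
  refine continuousAt_matrix_inv A ?_
  rw [Ring.inverse_eq_inv']
  exact continuousAt_inv₀ hA.ne_zero

lemma isCompact_setOf_posSemidef_re_trace_le (c : ℝ) :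
    IsCompact {X : Matrix ι ι 𝕜 | X.PosSemidef ∧ re X.trace ≤ c} := by
  classical
  convert (isCompact_setOf_re_trace_conjTranspose_mul_self_le c).image
    (f := fun B : Matrix ι ι 𝕜 => Bᴴ * B) (by fun_prop) using 1
  ext X
  constructor
  · rintro ⟨hX, hc⟩
    obtain ⟨B, rfl⟩ := CStarAlgebra.nonneg_iff_eq_star_mul_self.mp hX.nonneg
    exact ⟨B, hc, rfl⟩
  · rintro ⟨B, hB, rfl⟩
    exact ⟨posSemidef_conjTranspose_mul_self B, hB⟩

lemma exists_pos_mul_re_trace_le {A : Matrix ι ι 𝕜} (hA : A.PosDef) :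
    ∃ ε : ℝ, 0 < ε ∧ ∀ X : Matrix ι ι 𝕜, X.PosSemidef → ε * re X.trace ≤ re (A * X).trace := by
  classical
  obtain ⟨ε, hε, hεA⟩ := exists_pos_smul_one_le hA
  refine ⟨ε, hε, fun X hX => ?_⟩
  have hnonneg := (le_iff_re_im.mp (trace_mul_nonneg (le_iff.mp hεA) hX)).1
  simpa [Matrix.sub_mul, smul_re] using hnonneg

lemma trace_mul_eq_zero_iff {A B : Matrix ι ι 𝕜} (hA : A.PosDef) (hB : B.PosSemidef) :
    (A * B).trace = 0 ↔ B = 0 := by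
  refine ⟨fun h => ?_, fun h => by simp [h]⟩
  obtain ⟨ε, hε, hle⟩ := exists_pos_mul_re_trace_le hA
  have hεB : ε * re B.trace ≤ 0 := by simpa [h] using hle B hB
  exact hB.trace_eq_zero_iff.mp
    (eq_zero_of_nonneg_of_re_nonpos hB.trace_nonneg (nonpos_of_mul_nonpos_right hεB hε))

lemma mul_mul_same_eq_zero_iff {B Δ : Matrix ι ι 𝕜} (hB : B.PosDef) (hΔ : Δ.IsHermitian) :
    Δ * B * Δ = 0 ↔ Δ = 0 := by
  refine ⟨fun h => ?_, fun h => by simp [h]⟩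
  have htrace : (B * (Δᴴ * Δ)).trace = 0 := by
    rw [hΔ.eq, ← Matrix.mul_assoc, trace_mul_comm, ← Matrix.mul_assoc, h, trace_zero]
  exact conjTranspose_mul_self_eq_zero.mp
    ((trace_mul_eq_zero_iff hB (posSemidef_conjTranspose_mul_self Δ)).mp htrace)

variable [DecidableEq ι]

variable (𝕜 ι) in
/-- The nonsingular correlation matrices: positive definite with unit diagonal. They are the domain
on which `Q ↦ tr (A Q⁻¹)` is minimized. -/
def correlationMatrices : Set (Matrix ι ι 𝕜) :=
  {P | P.PosDef ∧ ∀ i, P i i = 1}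

lemma isUnit_det_of_mem_correlationMatrices {P : Matrix ι ι 𝕜} (hP : P ∈ correlationMatrices 𝕜 ι) :
    IsUnit P.det :=
  (isUnit_iff_isUnit_det P).mp hP.1.isUnit

lemma trace_mul_diagonal_mul_mul_inv {P Q : Matrix ι ι 𝕜} (hP : P ∈ correlationMatrices 𝕜 ι)
    (hQ : Q ∈ correlationMatrices 𝕜 ι) (d : ι → 𝕜) :
    (P * diagonal d * P * Q⁻¹).trace =
      ∑ i, d i + (diagonal d * ((P - Q) * Q⁻¹ * (P - Q))).trace := by
  have htrace : (diagonal d * (2 • P - Q)).trace = ∑ i, d i := by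
    simp only [trace, diag_apply, diagonal_mul, Matrix.sub_apply, Matrix.add_apply, hP.2, hQ.2,
      two_smul, add_sub_cancel_right, mul_one]
  rw [trace_mul_mul_mul_inv _ _ (isUnit_det_of_mem_correlationMatrices hQ), htrace]

lemma trace_diagonal_mul_sub_mul_inv_mul_sub {P Q : Matrix ι ι 𝕜}
    (hP : P ∈ correlationMatrices 𝕜 ι) (hQ : Q ∈ correlationMatrices 𝕜 ι) {d e : ι → 𝕜}
    (h : P * diagonal d * P = Q * diagonal e * Q) :
    (diagonal d * ((P - Q) * Q⁻¹ * (P - Q))).trace = ∑ i, e i - ∑ i, d i := by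
  have hQe := trace_mul_diagonal_mul_mul_inv hQ hQ e
  rw [← h, trace_mul_diagonal_mul_mul_inv hP hQ] at hQe
  rw [eq_sub_iff_add_eq', hQe]
  simp

lemma eq_of_mul_diagonal_mul_eq {P Q : Matrix ι ι 𝕜} (hP : P ∈ correlationMatrices 𝕜 ι)
    (hQ : Q ∈ correlationMatrices 𝕜 ι) {d e : ι → 𝕜} (hd : ∀ i, 0 < d i) (he : 0 ≤ e)
    (h : P * diagonal d * P = Q * diagonal e * Q) : P = Q := by
  have hPQ : (P - Q).IsHermitian := hP.1.isHermitian.sub hQ.1.isHermitian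
  have hQP : (Q - P).IsHermitian := hQ.1.isHermitian.sub hP.1.isHermitian
  have hpsd := posSemidef_mul_mul_same hQ.1.inv.posSemidef hPQ
  have hle : ∑ i, d i ≤ ∑ i, e i := by
    rw [← sub_nonneg, ← trace_diagonal_mul_sub_mul_inv_mul_sub hP hQ h]
    exact trace_mul_nonneg (.diagonal fun i => (hd i).le) hpsd
  have hge : ∑ i, e i ≤ ∑ i, d i := by
    rw [← sub_nonneg, ← trace_diagonal_mul_sub_mul_inv_mul_sub hQ hP h.symm]
    exact trace_mul_nonneg (.diagonal he) (posSemidef_mul_mul_same hP.1.inv.posSemidef hQP)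
  have hzero : (diagonal d * ((P - Q) * Q⁻¹ * (P - Q))).trace = 0 := by
    rw [trace_diagonal_mul_sub_mul_inv_mul_sub hP hQ h, le_antisymm hle hge, sub_self]
  rw [trace_mul_eq_zero_iff (.diagonal hd) hpsd, mul_mul_same_eq_zero_iff hQ.1.inv hPQ] at hzero
  exact sub_eq_zero.mp hzero

lemma re_trace_mul_mul_mul_inv_add_smul (P W H : Matrix ι ι 𝕜) {t : ℝ}
    (h : IsUnit (P + t • H).det) :
    re (P * W * P * (P + t • H)⁻¹).trace = re (W * P).trace - t * re (W * H).trace +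
      t * (t * re (W * (H * (P + t • H)⁻¹ * H)).trace) := by
  have hlinear : 2 • P - (P + t • H) = P - t • H := by
    rw [two_smul]
    abel
  rw [trace_mul_mul_mul_inv _ _ h, hlinear, sub_add_cancel_left]
  simp [Matrix.mul_sub, smul_re]

lemma re_trace_mul_nonpos_of_isMinOn {P W H : Matrix ι ι 𝕜} (hP : P ∈ correlationMatrices 𝕜 ι)
    (hmin : IsMinOn (fun Q => re (P * W * P * Q⁻¹).trace) (correlationMatrices 𝕜 ι) P)
    (hH : H.IsHermitian) (hdiag : ∀ i, H i i = 0) : re (W * H).trace ≤ 0 := by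
  have hPdet := isUnit_det_of_mem_correlationMatrices hP
  have hlim :
      Tendsto (fun t : ℝ => t * re (W * (H * (P + t • H)⁻¹ * H)).trace) (𝓝[>] 0) (𝓝 0) := by
    have hinv : ContinuousAt (fun t : ℝ => (P + t • H)⁻¹) 0 := by
      refine ContinuousAt.comp (f := fun t : ℝ => P + t • H) (continuousAt_inv_of_isUnit_det ?_)
        (by fun_prop)
      simpa using hPdet
    have hcont : ContinuousAt (fun t : ℝ => t * re (W * (H * (P + t • H)⁻¹ * H)).trace) 0 := by
      fun_prop
    simpa [ContinuousAt] using hcont.tendsto.mono_left nhdsWithin_le_nhds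
  refine ge_of_tendsto hlim ?_
  filter_upwards [eventually_posDef_add_smul hP.1 hH, self_mem_nhdsWithin] with t hpos ht
  have hmem : P + t • H ∈ correlationMatrices 𝕜 ι := ⟨hpos, fun i => by simp [hP.2, hdiag]⟩
  have hle : re (P * W * P * P⁻¹).trace ≤ re (P * W * P * (P + t • H)⁻¹).trace := hmin hmem
  rw [mul_nonsing_inv_cancel_right _ _ hPdet, trace_mul_comm P W,
    re_trace_mul_mul_mul_inv_add_smul _ _ _ (isUnit_det_of_mem_correlationMatrices hmem)] at hle
  exact le_of_mul_le_mul_left (by linarith) (Set.mem_Ioi.mp ht)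

lemma isDiag_of_isMinOn {P W : Matrix ι ι 𝕜} (hP : P ∈ correlationMatrices 𝕜 ι)
    (hmin : IsMinOn (fun Q => re (P * W * P * Q⁻¹).trace) (correlationMatrices 𝕜 ι) P)
    (hW : W.IsHermitian) : W.IsDiag := by
  set H := W - diagonal W.diag with hHdef
  have hH : H.IsHermitian := hW.sub (isHermitian_diagonal_iff.mpr fun i => hW.apply i i)
  have hdiag (i : ι) : H i i = 0 := by simp [hHdef]
  have htrace : (W * H).trace = (Hᴴ * H).trace := by
    have horth : (diagonal W.diag * H).trace = 0 := by simp [trace, diagonal_mul, hdiag]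
    rw [hH.eq, hHdef, Matrix.sub_mul, trace_sub, ← hHdef, horth, sub_zero]
  have hzero : (Hᴴ * H).trace = 0 :=
    eq_zero_of_nonneg_of_re_nonpos (posSemidef_conjTranspose_mul_self H).trace_nonneg
      (htrace ▸ re_trace_mul_nonpos_of_isMinOn hP hmin hH hdiag)
  rw [sub_eq_zero.mp (trace_conjTranspose_mul_self_eq_zero_iff.mp hzero)]
  exact isDiag_diagonal _

lemma isCompact_setOf_correlation_re_trace_mul_inv_le {A : Matrix ι ι 𝕜} (hA : A.PosDef) (c : ℝ) :
    IsCompact {P | P ∈ correlationMatrices 𝕜 ι ∧ re (A * P⁻¹).trace ≤ c} := by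
  obtain ⟨ε, hε, hle⟩ := exists_pos_mul_re_trace_le hA
  have hpairs : IsCompact
      ({P : Matrix ι ι 𝕜 | P.PosSemidef ∧ re P.trace ≤ Fintype.card ι} ×ˢ
        {X : Matrix ι ι 𝕜 | X.PosSemidef ∧ re X.trace ≤ c / ε} ∩
        {p | p.1 * p.2 = 1 ∧ p.1.diag = 1 ∧ re (A * p.2).trace ≤ c}) := by
    refine ((isCompact_setOf_posSemidef_re_trace_le _).prod
      (isCompact_setOf_posSemidef_re_trace_le _)).inter_right ?_
    exact (isClosed_eq (by fun_prop) continuous_const).inter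
      ((isClosed_eq (by fun_prop) continuous_const).inter
        (isClosed_le (continuous_re.comp (by fun_prop)) continuous_const))
  convert hpairs.image continuous_fst using 1
  ext P
  constructor
  · rintro ⟨⟨hP, hdiag⟩, hc⟩
    have hinv : P * P⁻¹ = 1 := mul_nonsing_inv _ ((isUnit_iff_isUnit_det P).mp hP.isUnit)
    refine ⟨(P, P⁻¹), ⟨⟨⟨hP.posSemidef, by simp [trace, hdiag]⟩, hP.inv.posSemidef, ?_⟩,
      hinv, funext hdiag, hc⟩, rfl⟩
    exact (le_div_iff₀' hε).mpr ((hle _ hP.inv.posSemidef).trans hc)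
  · rintro ⟨⟨P, X⟩, ⟨⟨⟨hP, -⟩, -⟩, hPX, hdiag, hc⟩, rfl⟩
    refine ⟨⟨hP.posDef_iff_isUnit.mpr (.of_mul_eq_one _ hPX), congrFun hdiag⟩, ?_⟩
    rwa [inv_eq_right_inv hPX]

lemma exists_isMinOn_re_trace_mul_inv {A : Matrix ι ι 𝕜} (hA : A.PosDef) :
    ∃ P ∈ correlationMatrices 𝕜 ι,
      IsMinOn (fun Q => re (A * Q⁻¹).trace) (correlationMatrices 𝕜 ι) P := by
  have hone : (1 : Matrix ι ι 𝕜) ∈ correlationMatrices 𝕜 ι := ⟨.one, by simp⟩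
  have hcont : ContinuousOn (fun Q => re (A * Q⁻¹).trace) (correlationMatrices 𝕜 ι) := by
    intro Q hQ
    have hinv := continuousAt_inv_of_isUnit_det (isUnit_det_of_mem_correlationMatrices hQ)
    have htrace : Continuous fun X : Matrix ι ι 𝕜 => re (A * X).trace :=
      continuous_re.comp (by fun_prop)
    exact (htrace.continuousAt.comp hinv).continuousWithinAt
  obtain ⟨P, ⟨hP, hP1⟩, hmin⟩ :=
    (isCompact_setOf_correlation_re_trace_mul_inv_le hA (re (A * 1⁻¹).trace)).exists_isMinOn
      ⟨1, hone, le_rfl⟩ (hcont.mono fun _ h => h.1)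
  refine ⟨P, hP, fun Q hQ => ?_⟩
  rcases le_total (re (A * Q⁻¹).trace) (re (A * 1⁻¹).trace) with hQ1 | hQ1
  · exact hmin ⟨hQ, hQ1⟩
  · exact hP1.trans hQ1

lemma exists_mul_diagonal_mul_eq {A : Matrix ι ι 𝕜} (hA : A.PosDef) :
    ∃ P ∈ correlationMatrices 𝕜 ι, ∃ v : ι → ℝ, (∀ i, 0 < v i) ∧
      P * diagonal (fun i => (v i : 𝕜)) * P = A := by
  obtain ⟨P, hP, hmin⟩ := exists_isMinOn_re_trace_mul_inv hA
  have hdet := isUnit_det_of_mem_correlationMatrices hP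
  set W := P⁻¹ * A * P⁻¹ with hWdef
  have hPWP : P * W * P = A := by
    rw [hWdef, Matrix.mul_assoc, nonsing_inv_mul_cancel_right _ _ hdet,
      mul_nonsing_inv_cancel_left _ _ hdet]
  have hW : W.PosDef := by
    have := hA.conjTranspose_mul_mul_same (mulVec_injective_iff_isUnit.mpr hP.1.inv.isUnit)
    rwa [hP.1.inv.isHermitian.eq] at this
  have hdiag : W.IsDiag := isDiag_of_isMinOn hP (by rwa [hPWP]) hW.isHermitian
  refine ⟨P, hP, fun i => re (W i i), fun i => (pos_iff.mp hW.diag_pos).1, ?_⟩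
  simp_rw [hW.isHermitian.coe_re_apply_self]
  rw [← hPWP]
  congr 2
  exact hdiag.diagonal_diag

variable (𝕜) in
/-- The matrix `diag(v)^{1/2}`; negative entries of `v` give `0`. -/
noncomputable def diagonalSqrt (v : ι → ℝ) : Matrix ι ι 𝕜 :=
  diagonal fun i => ((√(v i) : ℝ) : 𝕜)

omit [Fintype ι] in
lemma isHermitian_diagonalSqrt (v : ι → ℝ) : (diagonalSqrt 𝕜 v).IsHermitian :=
  isHermitian_diagonal_iff.mpr fun _ => conj_ofReal _

lemma isUnit_diagonalSqrt {v : ι → ℝ} (hv : ∀ i, 0 < v i) : IsUnit (diagonalSqrt 𝕜 v) := by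
  rw [diagonalSqrt, isUnit_diagonal, Pi.isUnit_iff]
  exact fun i => (ofReal_ne_zero.mpr (Real.sqrt_pos.mpr (hv i)).ne').isUnit

lemma diagonalSqrt_mul_self {v : ι → ℝ} (hv : ∀ i, 0 ≤ v i) :
    diagonalSqrt 𝕜 v * diagonalSqrt 𝕜 v = diagonal fun i => (v i : 𝕜) := by
  simp [diagonalSqrt, ← ofReal_mul, Real.mul_self_sqrt (hv _)]

lemma diagonalSqrt_mul_mul_diagonalSqrt_apply_self {v : ι → ℝ} (hv : ∀ i, 0 ≤ v i)
    (P : Matrix ι ι 𝕜) (i : ι) :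
    (diagonalSqrt 𝕜 v * P * diagonalSqrt 𝕜 v) i i = v i * P i i := by
  rw [diagonalSqrt, mul_diagonal, diagonal_mul, mul_right_comm, ← ofReal_mul,
    Real.mul_self_sqrt (hv i)]

/-- The map `φ(v) = diag((diag(v)^{1/2} A diag(v)^{1/2})^{1/2})`, for a positive semidefinite `A`
in place of `SᵀS`. The diagonal of a positive semidefinite matrix is real, so `re` only changes the
type of the entries. -/
noncomputable def phi (A : Matrix ι ι 𝕜) (v : ι → ℝ) : ι → ℝ :=
  fun i => re (CFC.sqrt (diagonalSqrt 𝕜 v * A * diagonalSqrt 𝕜 v) i i)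

lemma isFixedPt_phi_iff_exists_posSemidef {A : Matrix ι ι 𝕜} (hA : A.PosSemidef) {v : ι → ℝ} :
    Function.IsFixedPt (phi A) v ↔ ∃ R : Matrix ι ι 𝕜, R.PosSemidef ∧
      R * R = diagonalSqrt 𝕜 v * A * diagonalSqrt 𝕜 v ∧ ∀ i, R i i = v i := by
  constructor
  · intro h
    have hT := posSemidef_mul_mul_same hA (isHermitian_diagonalSqrt v)
    have hR := (CFC.sqrt_nonneg (diagonalSqrt 𝕜 v * A * diagonalSqrt 𝕜 v)).posSemidef
    refine ⟨_, hR, CFC.sqrt_mul_sqrt_self _ hT.nonneg, fun i => ?_⟩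
    rw [← hR.isHermitian.coe_re_apply_self]
    exact congrArg _ (congrFun h i)
  · rintro ⟨R, hR, hRR, hdiag⟩
    funext i
    rw [phi, CFC.sqrt_unique hRR hR.nonneg, hdiag, ofReal_re]

lemma isFixedPt_phi_iff_exists_mul_diagonal_mul_eq {A : Matrix ι ι 𝕜} (hA : A.PosDef) {v : ι → ℝ}
    (hv : ∀ i, 0 < v i) :
    Function.IsFixedPt (phi A) v ↔
      ∃ P ∈ correlationMatrices 𝕜 ι, P * diagonal (fun i => (v i : 𝕜)) * P = A := by
  rw [isFixedPt_phi_iff_exists_posSemidef hA.posSemidef,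
    ← diagonalSqrt_mul_self fun i => (hv i).le]
  set T := diagonalSqrt 𝕜 v
  have hT : IsUnit T := isUnit_diagonalSqrt hv
  have hTdet := (isUnit_iff_isUnit_det T).mp hT
  have hTH : T.IsHermitian := isHermitian_diagonalSqrt v
  constructor
  · rintro ⟨R, hR, hRR, hdiag⟩
    obtain ⟨P, rfl⟩ : ∃ P, R = T * P * T := ⟨T⁻¹ * R * T⁻¹, by
      rw [Matrix.mul_assoc, nonsing_inv_mul_cancel_right _ _ hTdet,
        mul_nonsing_inv_cancel_left _ _ hTdet]⟩
    have hPA : P * (T * T) * P = A := by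
      refine hT.mul_left_cancel (hT.mul_right_cancel ?_)
      simpa only [Matrix.mul_assoc] using hRR
    refine ⟨P, ⟨?_, fun i => ?_⟩, hPA⟩
    · have hP : P.PosSemidef := by
        rwa [← hT.posSemidef_star_left_conjugate_iff, star_eq_conjTranspose, hTH.eq]
      have hAdet := (isUnit_iff_isUnit_det A).mp hA.isUnit
      rw [← hPA, det_mul] at hAdet
      exact hP.posDef_iff_isUnit.mpr
        ((isUnit_iff_isUnit_det P).mpr (isUnit_of_mul_isUnit_right hAdet))
    · have hvi : (v i : 𝕜) ≠ 0 := ofReal_ne_zero.mpr (hv i).ne'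
      refine mul_left_cancel₀ hvi ?_
      rw [← diagonalSqrt_mul_mul_diagonalSqrt_apply_self (fun i => (hv i).le), hdiag, mul_one]
  · rintro ⟨P, hP, hPA⟩
    refine ⟨T * P * T, posSemidef_mul_mul_same hP.1.posSemidef hTH, ?_, fun i => ?_⟩
    · simp only [← hPA, Matrix.mul_assoc]
    · rw [diagonalSqrt_mul_mul_diagonalSqrt_apply_self (fun i => (hv i).le), hP.2, mul_one]

theorem phi_unique_fixed_point_general {A : Matrix ι ι 𝕜} (hA : A.PosDef) :
    ∃! v : ι → ℝ, (∀ i, 0 < v i) ∧ Function.IsFixedPt (phi A) v := by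
  obtain ⟨P, hP, v, hv, hPA⟩ := exists_mul_diagonal_mul_eq hA
  refine ⟨v, ⟨hv, (isFixedPt_phi_iff_exists_mul_diagonal_mul_eq hA hv).mpr ⟨P, hP, hPA⟩⟩, ?_⟩
  rintro w ⟨hw, hfix⟩
  obtain ⟨Q, hQ, hQA⟩ := (isFixedPt_phi_iff_exists_mul_diagonal_mul_eq hA hw).mp hfix
  obtain rfl : Q = P := eq_of_mul_diagonal_mul_eq hQ hP (fun i => ofReal_pos.mpr (hw i))
    (fun i => ofReal_nonneg.mpr (hv i).le) (hQA.trans hPA.symm)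
  have hdiag := hP.1.isUnit.mul_left_cancel (hP.1.isUnit.mul_right_cancel (hQA.trans hPA.symm))
  exact funext fun i => ofReal_injective (congrFun (diagonal_injective hdiag) i)

end

/-- Corollary `uniqueness_phi_fixed_point`: the map
`φ(v) = diag-part((diag(v)^{1/2}(SᵀS)diag(v)^{1/2})^{1/2})` has exactly one
fixed point among vectors with all entries strictly positive.  (Here the PSD
square root is characterized as the PSD matrix `R` with
`R·R = diag(√v)(SᵀS)diag(√v)`.) -/
theorem phi_unique_fixed_point (n : ℕ) (hn : 1 ≤ n)
    (S : Matrix (Fin n) (Fin n) ℝ) (hS : IsUnit S.det) :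
    ∃! lam : Fin n → ℝ,
      (∀ i, 0 < lam i) ∧
      ∃ R : Matrix (Fin n) (Fin n) ℝ, R.PosSemidef ∧
        R * R = Matrix.diagonal (fun i => Real.sqrt (lam i)) * (Sᵀ * S) *
          Matrix.diagonal (fun i => Real.sqrt (lam i)) ∧
        (∀ i : Fin n, R i i = lam i) := by
  have hA : (Sᵀ * S).PosDef := by
    simpa using PosDef.conjTranspose_mul_self S
      (mulVec_injective_iff_isUnit.mpr ((isUnit_iff_isUnit_det S).mpr hS))
  simpa [isFixedPt_phi_iff_exists_posSemidef hA.posSemidef, diagonalSqrt] using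
    phi_unique_fixed_point_general hA
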